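/- arXiv:1812.08076 — 2 statements merged into one kernel-verified Lean document; each statement's English description precedes it below -/
import Mathlib

section
/- Consider the UE's per-slot power minimization problem: minimize F(f,P) = Vκf³ + VP − b·f − a·∫₀^∞ ln(1 + P·h/(N₀W + I)) dμ(I) over f ≥ 0, P ≥ 0 subject to κf³ + P ≤ Pmax, where V ≥ 0, κ > 0, b > 0, a ≥ 0, h > 0, N₀W > 0, Pmax > 0, and μ is a probability measure on [0,∞). Suppose γ* ≥ 0, f* = √(b/(3κ(V+γ*))) (with V + γ* > 0), and P* ≥ 0 satisfy: (i) either a·∫₀^∞ h/(N₀W + I) dμ(I) ≤ V + γ* and P* = 0, or P* > 0 and a·∫₀^∞ h/(N₀W + I + P*·h) dμ(I) = V + γ*; (ii) κ(f*)³ + P* ≤ Pmax; and (iii) γ* = 0 if κ(f*)³ + P* < Pmax, while κ(f*)³ + P* = Pmax if γ* > 0. Then (f*, P*) is a global minimizer of F over the feasible set. -/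
open MeasureTheory

/-- Lemma 1 (sufficiency of the KKT conditions): the UE's per-slot power
minimization: minimize `F f P = Vκf³ + VP − b·f − a·∫ log(1 + P·h/(N₀W + I)) dμ(I)`
over `f ≥ 0, P ≥ 0` with `κf³ + P ≤ Pmax`.  The KKT point `(f*, P*)` with
multiplier `γ*` is a global minimizer. -/
theorem stmt_0
    (V κ b a h NW Pmax : ℝ)
    (hV : 0 ≤ V) (hκ : 0 < κ) (hb : 0 < b) (ha : 0 ≤ a)
    (hh : 0 < h) (hNW : 0 < NW) (hPmax : 0 < Pmax)
    (μ : Measure ℝ) [IsProbabilityMeasure μ] (hμ : μ (Set.Iio 0) = 0)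
    (F : ℝ → ℝ → ℝ)
    (hF : ∀ f P : ℝ, F f P =
      V * κ * f ^ 3 + V * P - b * f
        - a * ∫ I, Real.log (1 + P * h / (NW + I)) ∂μ)
    (γs fs Ps : ℝ)
    (hγs : 0 ≤ γs) (hVγ : 0 < V + γs)
    (hfs : fs = Real.sqrt (b / (3 * κ * (V + γs))))
    (hPs : 0 ≤ Ps)
    (hstat : (a * ∫ I, h / (NW + I) ∂μ ≤ V + γs ∧ Ps = 0) ∨
      (0 < Ps ∧ a * ∫ I, h / (NW + I + Ps * h) ∂μ = V + γs))
    (hfeas : κ * fs ^ 3 + Ps ≤ Pmax)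
    (hslack : κ * fs ^ 3 + Ps < Pmax → γs = 0)
    (hactive : 0 < γs → κ * fs ^ 3 + Ps = Pmax) :
    ∀ f P : ℝ, 0 ≤ f → 0 ≤ P → κ * f ^ 3 + P ≤ Pmax → F fs Ps ≤ F f P := by
  intro f P hf hP hfP
  have hae : ∀ᵐ I ∂μ, 0 ≤ I := by
    rw [ae_iff]
    have : {x : ℝ | ¬ 0 ≤ x} = Set.Iio 0 := by
      ext x; simp
    rw [this]; exact hμ
  have hlogint : ∀ Q : ℝ, 0 ≤ Q →
      Integrable (fun I => Real.log (1 + Q * h / (NW + I))) μ := by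
    intro Q hQ
    refine Integrable.of_bound (C := Q * h / NW) ?_ ?_
    · exact Measurable.aestronglyMeasurable (by fun_prop)
    · filter_upwards [hae] with I hI
      have h1 : 0 ≤ Q * h / (NW + I) := by positivity
      have h2 : Q * h / (NW + I) ≤ Q * h / NW := by
        apply div_le_div_of_nonneg_left <;> first | positivity | linarith
      rw [Real.norm_eq_abs, abs_of_nonneg (Real.log_nonneg (by linarith))]
      have := Real.log_le_sub_one_of_pos (show 0 < 1 + Q * h / (NW + I) by linarith)
      linarith
  have hgint : Integrable (fun I => h / (NW + I + Ps * h)) μ := by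
    refine Integrable.of_bound (C := h / NW) ?_ ?_
    · exact Measurable.aestronglyMeasurable (by fun_prop)
    · filter_upwards [hae] with I hI
      have hp : 0 ≤ Ps * h := by positivity
      rw [Real.norm_eq_abs, abs_of_nonneg (by positivity)]
      apply div_le_div_of_nonneg_left <;> first | positivity | linarith
  have hkey : (∫ I, Real.log (1 + P * h / (NW + I)) ∂μ)
      - (∫ I, Real.log (1 + Ps * h / (NW + I)) ∂μ)
      ≤ (P - Ps) * ∫ I, h / (NW + I + Ps * h) ∂μ := by
    rw [← integral_sub (hlogint P hP) (hlogint Ps hPs), ← integral_const_mul]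
    refine integral_mono_ae ((hlogint P hP).sub (hlogint Ps hPs)) (hgint.const_mul _) ?_
    filter_upwards [hae] with I hI
    have hD : 0 < NW + I := by linarith
    have hA : 0 < 1 + P * h / (NW + I) := by positivity
    have hB : 0 < 1 + Ps * h / (NW + I) := by positivity
    have hE : 0 < NW + I + Ps * h := by positivity
    have h1 := Real.log_le_sub_one_of_pos (div_pos hA hB)
    rw [Real.log_div hA.ne' hB.ne'] at h1
    have h2 : (1 + P * h / (NW + I)) / (1 + Ps * h / (NW + I)) - 1
        = (P - Ps) * (h / (NW + I + Ps * h)) := by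
      have h3 : 1 + Ps * h / (NW + I) = (NW + I + Ps * h) / (NW + I) := by
        field_simp
      rw [h3]
      field_simp
      ring
    linarith
  have hkey2 : a * (∫ I, Real.log (1 + P * h / (NW + I)) ∂μ)
      - a * (∫ I, Real.log (1 + Ps * h / (NW + I)) ∂μ) ≤ (P - Ps) * (V + γs) := by
    have h1 := mul_le_mul_of_nonneg_left hkey ha
    rcases hstat with ⟨h2, h3⟩ | ⟨_, h2⟩
    · subst h3
      simp only [zero_mul, add_zero, sub_zero] at h1 ⊢
      have h4 := mul_le_mul_of_nonneg_left h2 hP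
      simp only [zero_mul, zero_div, add_zero] at h1 ⊢
      linarith
    · rw [← h2]
      linarith
  have hfs0 : 0 ≤ fs := by rw [hfs]; exact Real.sqrt_nonneg _
  have hfs2 : b = 3 * κ * (V + γs) * fs ^ 2 := by
    rw [hfs, Real.sq_sqrt (by positivity)]
    field_simp
  have hcube : 0 ≤ κ * (V + γs) * ((f - fs) ^ 2 * (f + 2 * fs)) := by positivity
  have hγ : γs * (κ * f ^ 3 + P) ≤ γs * (κ * fs ^ 3 + Ps) := by
    rcases hγs.eq_or_lt with h0 | h0
    · rw [← h0]; simp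
    · rw [hactive h0]
      exact mul_le_mul_of_nonneg_left hfP hγs
  have hb2 : b * (f - fs) = 3 * κ * (V + γs) * fs ^ 2 * (f - fs) := by rw [← hfs2]
  rw [hF, hF]
  linarith
end

section
/- Let a > 0, h > 0, N > 0, λ > 0, and let μ be a probability measure on [0,∞). Define φ(P) = λ·P − a·∫₀^∞ ln(1 + P·h/(N + I)) dμ(I) for P ≥ 0. Then: (i) φ is convex on [0,∞); (ii) if a·∫₀^∞ h/(N + I) dμ(I) ≤ λ, then P = 0 is a global minimizer of φ on [0,∞); (iii) if a·∫₀^∞ h/(N + I) dμ(I) > λ, then there exists a unique P* > 0 with a·∫₀^∞ h/(N + I + P*·h) dμ(I) = λ, and this P* is the unique global minimizer of φ on [0,∞). -/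
open MeasureTheory

lemma aux_ae (μ : Measure ℝ) (hμ : μ (Set.Iio 0) = 0) : ∀ᵐ I ∂μ, (0:ℝ) ≤ I := by
  rw [ae_iff]
  convert hμ using 2
  ext x
  simp

lemma aux_intG (h N : ℝ) (hh : 0 < h) (hN : 0 < N)
    (μ : Measure ℝ) [IsProbabilityMeasure μ] (hμ : μ (Set.Iio 0) = 0) (P : ℝ) (hP : 0 ≤ P) :
    Integrable (fun I => h / (N + I + P * h)) μ := by
  refine Integrable.of_bound (C := h / N)
    (Measurable.aestronglyMeasurable (by fun_prop)) ?_
  filter_upwards [aux_ae μ hμ] with I hI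
  have : 0 ≤ P * h := by positivity
  rw [Real.norm_of_nonneg (by positivity)]
  gcongr
  linarith

lemma aux_intL (h N : ℝ) (hh : 0 < h) (hN : 0 < N)
    (μ : Measure ℝ) [IsProbabilityMeasure μ] (hμ : μ (Set.Iio 0) = 0) (P : ℝ) (hP : 0 ≤ P) :
    Integrable (fun I => Real.log (1 + P * h / (N + I))) μ := by
  refine Integrable.of_bound (C := P * h / N) ?_ ?_
  · exact (Real.measurable_log.comp (by fun_prop)).aestronglyMeasurable
  filter_upwards [aux_ae μ hμ] with I hI
  have h0 : 0 ≤ P * h / (N + I) := by positivity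
  rw [Real.norm_of_nonneg (Real.log_nonneg (by linarith))]
  have h1 := Real.log_le_sub_one_of_pos (show 0 < 1 + P * h / (N + I) by linarith)
  have h2 : P * h / (N + I) ≤ P * h / N := by
    gcongr
    linarith
  linarith

lemma aux_pt (h N I P Q : ℝ) (hh : 0 < h) (hN : 0 < N) (hI : 0 ≤ I) (hP : 0 ≤ P) (hQ : 0 ≤ Q)
    (hPQ : Q ≠ P) :
    Real.log (1 + Q * h / (N + I)) <
      Real.log (1 + P * h / (N + I)) + (Q - P) * (h / (N + I + P * h)) := by
  have hx : 0 < 1 + Q * h / (N + I) := by positivity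
  have hy : 0 < 1 + P * h / (N + I) := by positivity
  have e : (1 + Q * h / (N + I)) / (1 + P * h / (N + I)) - 1
      = (Q - P) * (h / (N + I + P * h)) := by
    have : N + I ≠ 0 := by positivity
    have : N + I + P * h ≠ 0 := by positivity
    field_simp
    ring
  have hd : 0 < h / (N + I + P * h) := by positivity
  have hne : (1 + Q * h / (N + I)) / (1 + P * h / (N + I)) ≠ 1 := by
    intro h1
    rw [h1, sub_self] at e
    exact (mul_ne_zero (sub_ne_zero.2 hPQ) hd.ne') e.symm
  have := Real.log_lt_sub_one_of_pos (div_pos hx hy) hne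
  rw [Real.log_div hx.ne' hy.ne', e] at this
  linarith

lemma aux_tan (h N : ℝ) (hh : 0 < h) (hN : 0 < N)
    (μ : Measure ℝ) [IsProbabilityMeasure μ] (hμ : μ (Set.Iio 0) = 0) (P Q : ℝ)
    (hP : 0 ≤ P) (hQ : 0 ≤ Q) (hPQ : Q ≠ P) :
    ∫ I, Real.log (1 + Q * h / (N + I)) ∂μ <
      ∫ I, Real.log (1 + P * h / (N + I)) ∂μ + (Q - P) * ∫ I, h / (N + I + P * h) ∂μ := by
  have i1 := aux_intL h N hh hN μ hμ P hP
  have i2 := (aux_intG h N hh hN μ hμ P hP).const_mul (Q - P)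
  have hae : ∀ᵐ I ∂μ, Real.log (1 + Q * h / (N + I)) <
      Real.log (1 + P * h / (N + I)) + (Q - P) * (h / (N + I + P * h)) := by
    filter_upwards [aux_ae μ hμ] with I hI using aux_pt h N I P Q hh hN hI hP hQ hPQ
  rw [← integral_const_mul, ← integral_add i1 i2]
  have i0 := aux_intL h N hh hN μ hμ Q hQ
  have i3 := i1.add i2
  have hle := hae.mono fun _ h => h.le
  refine lt_of_le_of_ne (integral_mono_ae i0 i3 hle) ?_
  intro heq
  have hz := (integral_eq_iff_of_ae_le i0 i3 hle).1 heq
  have : ∀ᵐ I ∂μ, False := by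
    filter_upwards [hz, hae] with I h1 h2
    exact h2.ne h1
  obtain ⟨_, hf⟩ := this.exists
  exact hf

lemma aux_cont (h N : ℝ) (hh : 0 < h) (hN : 0 < N)
    (μ : Measure ℝ) [IsProbabilityMeasure μ] (hμ : μ (Set.Iio 0) = 0) :
    ContinuousOn (fun P => ∫ I, h / (N + I + P * h) ∂μ) (Set.Ici 0) := by
  refine continuousOn_of_dominated (bound := fun _ => h / N) ?_ ?_ (integrable_const _) ?_
  · intro P hP
    exact (aux_intG h N hh hN μ hμ P hP).aestronglyMeasurable
  · intro P hP
    have hP : 0 ≤ P := hP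
    filter_upwards [aux_ae μ hμ] with I hI
    have : 0 ≤ P * h := by positivity
    rw [Real.norm_of_nonneg (by positivity)]
    gcongr
    linarith
  · filter_upwards [aux_ae μ hμ] with I hI
    refine ContinuousOn.div (by fun_prop) (by fun_prop) ?_
    intro P hP
    have hP : 0 ≤ P := hP
    positivity

/-- Transmit-power component: `φ P = λ·P − a·∫ log(1 + P·h/(N + I)) dμ(I)`.
(i) `φ` is convex on `[0,∞)`; (ii) if `a·∫ h/(N+I) dμ ≤ λ` then `P = 0` is a
global minimizer; (iii) if `a·∫ h/(N+I) dμ > λ` there is a unique `P* > 0`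
solving `a·∫ h/(N+I+P*h) dμ = λ`, and it is the unique global minimizer. -/
theorem stmt_2
    (a h N lam : ℝ) (ha : 0 < a) (hh : 0 < h) (hN : 0 < N) (hlam : 0 < lam)
    (μ : Measure ℝ) [IsProbabilityMeasure μ] (hμ : μ (Set.Iio 0) = 0)
    (φ : ℝ → ℝ)
    (hφ : ∀ P : ℝ, φ P = lam * P - a * ∫ I, Real.log (1 + P * h / (N + I)) ∂μ) :
    ConvexOn ℝ (Set.Ici 0) φ ∧
    ((a * ∫ I, h / (N + I) ∂μ ≤ lam) → ∀ P : ℝ, 0 ≤ P → φ 0 ≤ φ P) ∧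
    ((lam < a * ∫ I, h / (N + I) ∂μ) →
      ∃ Ps : ℝ, 0 < Ps ∧ a * (∫ I, h / (N + I + Ps * h) ∂μ) = lam ∧
        (∀ P : ℝ, 0 < P → a * (∫ I, h / (N + I + P * h) ∂μ) = lam → P = Ps) ∧
        (∀ P : ℝ, 0 ≤ P → φ Ps ≤ φ P) ∧
        (∀ P : ℝ, 0 ≤ P → φ P = φ Ps → P = Ps)) := by
  have tan : ∀ P Q : ℝ, 0 ≤ P → 0 ≤ Q → Q ≠ P →
      φ P + (Q - P) * (lam - a * ∫ I, h / (N + I + P * h) ∂μ) < φ Q := by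
    intro P Q hP hQ hPQ
    have := mul_lt_mul_of_pos_left (aux_tan h N hh hN μ hμ P Q hP hQ hPQ) ha
    rw [hφ, hφ]
    linarith
  have tan' : ∀ P Q : ℝ, 0 ≤ P → 0 ≤ Q →
      φ P + (Q - P) * (lam - a * ∫ I, h / (N + I + P * h) ∂μ) ≤ φ Q := by
    intro P Q hP hQ
    by_cases e : Q = P
    · subst e
      simp
    · exact (tan P Q hP hQ e).le
  have G0 : ∫ I, h / (N + I + 0 * h) ∂μ = ∫ I, h / (N + I) ∂μ := by simp
  refine ⟨⟨convex_Ici 0, ?_⟩, ?_, ?_⟩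
  · intro x hx y hy s t hs ht hst
    have hx : 0 ≤ x := hx
    have hy : 0 ≤ y := hy
    simp only [smul_eq_mul]
    have hR : 0 ≤ s * x + t * y := by positivity
    have h1 := mul_le_mul_of_nonneg_left (tan' _ x hR hx) hs
    have h2 := mul_le_mul_of_nonneg_left (tan' _ y hR hy) ht
    obtain rfl : t = 1 - s := by linarith
    linarith
  · intro hle P hP
    have := tan' 0 P le_rfl hP
    rw [G0] at this
    have h2 := mul_nonneg hP (sub_nonneg.2 hle)
    rw [sub_zero] at this
    linarith
  · intro hlt
    have hb : 0 < a / lam := by positivity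
    have hc : ContinuousOn (fun P => a * ∫ I, h / (N + I + P * h) ∂μ) (Set.Icc 0 (a / lam)) :=
      continuousOn_const.mul ((aux_cont h N hh hN μ hμ).mono Set.Icc_subset_Ici_self)
    have hup : a * ∫ I, h / (N + I + a / lam * h) ∂μ ≤ lam := by
      have : ∫ I, h / (N + I + a / lam * h) ∂μ ≤ ∫ _I, lam / a ∂μ := by
        refine integral_mono_ae (aux_intG h N hh hN μ hμ _ hb.le) (integrable_const _) ?_
        filter_upwards [aux_ae μ hμ] with I hI
        have e : lam / a = h / (a / lam * h) := by field_simp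
        rw [e]
        gcongr
        linarith
      have := mul_le_mul_of_nonneg_left this ha.le
      simp only [integral_const, probReal_univ, one_smul] at this
      rwa [mul_div_cancel₀ _ ha.ne'] at this
    obtain ⟨Ps, hPs, hG⟩ := intermediate_value_Icc' hb.le hc
      ⟨hup, by simpa using hlt.le⟩
    simp only at hG
    have hpos : 0 < Ps := by
      refine lt_of_le_of_ne hPs.1 ?_
      rintro rfl
      rw [G0] at hG
      linarith
    have st : ∀ P Q : ℝ, 0 ≤ P → 0 ≤ Q → Q ≠ P →
        a * (∫ I, h / (N + I + P * h) ∂μ) = lam → φ P < φ Q := by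
      intro P Q hP hQ hne e
      have := tan P Q hP hQ hne
      rw [e] at this
      simpa using this
    refine ⟨Ps, hpos, hG, ?_, ?_, ?_⟩
    · intro P hP e
      by_contra hne
      exact lt_asymm (st P Ps hP.le hpos.le (Ne.symm hne) e) (st Ps P hpos.le hP.le hne hG)
    · intro P hP
      by_cases e : P = Ps
      · rw [e]
      · exact (st Ps P hpos.le hP e hG).le
    · intro P hP e
      by_contra hne
      exact (st Ps P hpos.le hP hne hG).ne' e
end
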